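/- The number of strings of length n over the alphabet {D, A, F} that contain no subsequence of consecutive symbols of the form D F...F D (one or more F's enclosed by two D's) is Θ(αⁿ), where α < 2.83929 is the largest real root of the characteristic polynomial of the associated linear recurrence. In particular this count is O(cⁿ) for some c < 2.83929. -/

import Mathlib

/-!
Statement 12: the number of strings of length n over {D, A, F} avoiding the
contiguous pattern D F…F D (one or more F's enclosed by two D's) is Θ(αⁿ) for
some α < 2.83929; in particular it is O(cⁿ) for some c < 2.83929.
-/

inductive L3 : Type
  | D | A | F
deriving DecidableEq

/-- `s` contains a forbidden block: positions `i < j` with `j ≥ i + 2`, both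
holding `D`, and all positions strictly in between holding `F`. -/
def HasForb {n : ℕ} (s : Fin n → L3) : Prop :=
  ∃ i j : Fin n, (i : ℕ) + 1 < (j : ℕ) ∧ s i = L3.D ∧ s j = L3.D ∧
    ∀ k : Fin n, (i : ℕ) < (k : ℕ) → (k : ℕ) < (j : ℕ) → s k = L3.F

/-- The number of admissible strings of length `n`. -/
noncomputable def admCount (n : ℕ) : ℕ :=
  Nat.card {s : Fin n → L3 // ¬ HasForb s}

/-!
Read a string from the left. What matters about the part already read is only whether a block is
pending: no `D` pending, a `D` just read, or a `D` followed by at least one `F`. Let `N₀`, `N₁`, `N₂`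
count the length-`n` strings that may follow in these three situations. Splitting on the first
symbol (`card_split` and the three `*_cons` lemmas) gives

  `N₀' = 2 N₀ + N₁`,  `N₁' = N₀ + N₁ + N₂`,  `N₂' = N₀ + N₂`,

with `N₀ = N₁ = N₂ = 1` at `n = 0`. The characteristic polynomial of this system is
`x³ - 4x² + 4x - 2`, which has a root `α` slightly below `2.83929` (`exists_root`), and
`v = (1, α - 2, 1 / (α - 1))` is a positive eigenvector for `α`. As `v ≤ (1, 1, 1) ≤ 2v` and the
system has nonnegative coefficients, `αⁿ v ≤ (N₀, N₁, N₂) ≤ 2 αⁿ v` for all `n`.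
-/

instance : Fintype L3 := ⟨{L3.D, L3.A, L3.F}, fun x => by cases x <;> decide⟩

/-- `s` starts with a (possibly empty) run of `F`s followed by a `D`, so that it completes a
forbidden block when preceded by `D F…F` with at least one `F`. -/
def ClosesDF {n : ℕ} (s : Fin n → L3) : Prop :=
  ∃ j : Fin n, s j = L3.D ∧ ∀ k : Fin n, (k : ℕ) < (j : ℕ) → s k = L3.F

/-- `s` starts with a nonempty run of `F`s followed by a `D`, so that it completes a forbidden
block when preceded by `D`. -/
def ClosesD {n : ℕ} (s : Fin n → L3) : Prop :=
  ∃ j : Fin n, 0 < (j : ℕ) ∧ s j = L3.D ∧ ∀ k : Fin n, (k : ℕ) < (j : ℕ) → s k = L3.F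

lemma hasForb_cons {n : ℕ} (x : L3) (s : Fin n → L3) :
    HasForb (Fin.cons x s : Fin (n + 1) → L3) ↔ HasForb s ∨ (x = L3.D ∧ ClosesD s) := by
  simp [HasForb, ClosesD, Fin.exists_fin_succ, Fin.forall_fin_succ]
  simp only [and_left_comm (b := x = L3.D), exists_and_left]
  exact or_comm

lemma closesD_cons {n : ℕ} (x : L3) (s : Fin n → L3) :
    ClosesD (Fin.cons x s : Fin (n + 1) → L3) ↔ x = L3.F ∧ ClosesDF s := by
  simp [ClosesDF, ClosesD, Fin.exists_fin_succ, Fin.forall_fin_succ]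
  grind

lemma closesDF_cons {n : ℕ} (x : L3) (s : Fin n → L3) :
    ClosesDF (Fin.cons x s : Fin (n + 1) → L3) ↔ x = L3.D ∨ (x = L3.F ∧ ClosesDF s) := by
  simp [ClosesDF, Fin.exists_fin_succ, Fin.forall_fin_succ]
  grind

lemma card_split {n : ℕ} (P : (Fin (n + 1) → L3) → Prop) :
    Nat.card {s // P s} = Nat.card {s : Fin n → L3 // P (Fin.cons L3.D s)}
      + Nat.card {s : Fin n → L3 // P (Fin.cons L3.A s)}
      + Nat.card {s : Fin n → L3 // P (Fin.cons L3.F s)} := by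
  classical
  have e : {s // P s} ≃ (x : L3) × {s : Fin n → L3 // P (Fin.cons x s)} :=
    { toFun := fun s => ⟨s.1 0, Fin.tail s.1, by rw [Fin.cons_self_tail]; exact s.2⟩
      invFun := fun p => ⟨Fin.cons p.1 p.2.1, p.2.2⟩
      left_inv := fun s => Subtype.ext (Fin.cons_self_tail s.1)
      right_inv := fun p => rfl }
  rw [Nat.card_congr e, Nat.card_sigma]
  have hu : (Finset.univ : Finset L3) = {L3.D, L3.A, L3.F} := rfl
  simp [hu, add_assoc]

/-- The number of strings of length `n` that may follow a `D`. -/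
noncomputable def count₁ (n : ℕ) : ℕ :=
  Nat.card {s : Fin n → L3 // ¬ (HasForb s ∨ ClosesD s)}

/-- The number of strings of length `n` that may follow `D F…F` with at least one `F`. -/
noncomputable def count₂ (n : ℕ) : ℕ :=
  Nat.card {s : Fin n → L3 // ¬ (HasForb s ∨ ClosesDF s)}

lemma admCount_succ (n : ℕ) : admCount (n + 1) = 2 * admCount n + count₁ n := by
  unfold admCount count₁
  rw [card_split]
  simp [hasForb_cons]
  ring

lemma count₁_succ (n : ℕ) : count₁ (n + 1) = admCount n + count₁ n + count₂ n := by
  unfold admCount count₁ count₂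
  rw [card_split]
  simp [hasForb_cons, closesD_cons]
  ring

lemma count₂_succ (n : ℕ) : count₂ (n + 1) = admCount n + count₂ n := by
  unfold admCount count₂
  rw [card_split]
  simp [hasForb_cons, closesDF_cons]

lemma admCount_zero : admCount 0 = 1 := by simp [admCount, HasForb]

lemma count₁_zero : count₁ 0 = 1 := by simp [count₁, HasForb, ClosesD]

lemma count₂_zero : count₂ 0 = 1 := by simp [count₂, HasForb, ClosesDF]

lemma exists_root :
    ∃ α : ℝ, 2.8 < α ∧ α < 2.83929 ∧ α ^ 3 - 4 * α ^ 2 + 4 * α - 2 = 0 := by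
  have hc : ContinuousOn (fun x : ℝ => x ^ 3 - 4 * x ^ 2 + 4 * x - 2) (Set.Icc 2.8 2.83929) := by
    fun_prop
  obtain ⟨α, ⟨h1, h2⟩, h⟩ := intermediate_value_Ioo (by norm_num) hc
    (show (0 : ℝ) ∈ Set.Ioo _ _ by constructor <;> norm_num)
  exact ⟨α, h1, h2, h⟩

theorem admissible_strings_growth :
    ∃ α c₁ c₂ : ℝ, 0 < c₁ ∧ 0 < c₂ ∧ 1 < α ∧ α < 2.83929 ∧
      ∀ n : ℕ, c₁ * α ^ n ≤ (admCount n : ℝ) ∧ (admCount n : ℝ) ≤ c₂ * α ^ n := by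
  obtain ⟨α, h1, h2, h⟩ := exists_root
  -- `w` is the third coordinate of the eigenvector `(1, α - 2, w)`.
  obtain ⟨w, hw⟩ : ∃ w : ℝ, w * (α - 1) = 1 := ⟨(α - 1)⁻¹, inv_mul_cancel₀ (by linarith)⟩
  have hw1 : w ≤ 1 := by nlinarith
  have hw2 : 1 ≤ 2 * w := by nlinarith
  -- The second row of the eigenvector equation is where the characteristic polynomial enters.
  have hrow : (α - 2) * α = 1 + (α - 2) + w := by
    have h0 : α - 1 ≠ 0 := by linarith
    apply mul_right_cancel₀ h0
    linear_combination h - hw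
  have key : ∀ n : ℕ,
      (α ^ n ≤ (admCount n : ℝ) ∧ (admCount n : ℝ) ≤ 2 * α ^ n) ∧
      ((α - 2) * α ^ n ≤ (count₁ n : ℝ) ∧ (count₁ n : ℝ) ≤ 2 * ((α - 2) * α ^ n)) ∧
      (w * α ^ n ≤ (count₂ n : ℝ) ∧ (count₂ n : ℝ) ≤ 2 * (w * α ^ n)) := by
    intro n
    induction n with
    | zero =>
      simp only [admCount_zero, count₁_zero, count₂_zero, pow_zero, Nat.cast_one]
      refine ⟨⟨?_, ?_⟩, ⟨?_, ?_⟩, ?_, ?_⟩ <;> linarith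
    | succ n ih =>
      obtain ⟨⟨a1, a2⟩, ⟨b1, b2⟩, d1, d2⟩ := ih
      have e0 : α ^ (n + 1) = 2 * α ^ n + (α - 2) * α ^ n := by ring
      have e1 : (α - 2) * α ^ (n + 1) = α ^ n + (α - 2) * α ^ n + w * α ^ n := by
        linear_combination α ^ n * hrow
      have e2 : w * α ^ (n + 1) = α ^ n + w * α ^ n := by
        linear_combination α ^ n * hw
      rw [e1, e2, e0, admCount_succ, count₁_succ, count₂_succ]
      push_cast
      refine ⟨⟨?_, ?_⟩, ⟨?_, ?_⟩, ?_, ?_⟩ <;> linarith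
  refine ⟨α, 1, 2, one_pos, two_pos, by linarith, h2, fun n => ?_⟩
  rw [one_mul]
  exact (key n).1
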